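/- arXiv:1203.6289 — 6 statements merged into one kernel-verified Lean document; each statement's English description precedes it below -/
import Mathlib

section
/- Let N ≥ 2 be an integer and let q be a nonzero complex number. On the N-fold tensor product (ℂ²)^{⊗N} (equivalently, on complex matrices indexed by functions Fin N → Fin 2), define for 1 ≤ i ≤ N−1 the operator e_i = (q+q⁻¹)/4 · Id − (1/2)(σˣ_i σˣ_{i+1} + σʸ_i σʸ_{i+1} + ((q+q⁻¹)/2) σᶻ_i σᶻ_{i+1}) − ((q−q⁻¹)/4)(σᶻ_i − σᶻ_{i+1}), where σᵃ_j denotes the Pauli matrix σᵃ acting on the j-th tensor factor and the identity on all other factors. Then these operators satisfy the Temperley–Lieb relations: (i) e_i² = (q+q⁻¹) e_i for all 1 ≤ i ≤ N−1; (ii) e_i e_{i+1} e_i = e_i and e_{i+1} e_i e_{i+1} = e_{i+1} for all 1 ≤ i ≤ N−2; (iii) e_i e_j = e_j e_i whenever |i−j| ≥ 2. -/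
open Matrix

/-- Pauli matrix σˣ. -/
noncomputable def sigmaX : Matrix (Fin 2) (Fin 2) ℂ := !![0, 1; 1, 0]

/-- Pauli matrix σʸ. -/
noncomputable def sigmaY : Matrix (Fin 2) (Fin 2) ℂ := !![0, -Complex.I; Complex.I, 0]

/-- Pauli matrix σᶻ. -/
noncomputable def sigmaZ : Matrix (Fin 2) (Fin 2) ℂ := !![1, 0; 0, -1]

/-- The operator acting as the 2×2 matrix `σ` on the `j`-th tensor factor of `(ℂ²)^{⊗N}`
and as the identity on all other factors. -/
noncomputable def pauliAt (N : ℕ) (σ : Matrix (Fin 2) (Fin 2) ℂ) (j : Fin N) :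
    Matrix (Fin N → Fin 2) (Fin N → Fin 2) ℂ :=
  Matrix.of fun f g =>
    σ (f j) (g j) * ∏ k ∈ Finset.univ.erase j, (if f k = g k then (1 : ℂ) else 0)

/-- The Temperley–Lieb density built from sites `a` and `b` of the XXZ spin chain. -/
noncomputable def TLdensity (N : ℕ) (q : ℂ) (a b : Fin N) :
    Matrix (Fin N → Fin 2) (Fin N → Fin 2) ℂ :=
  ((q + q⁻¹) / 4) • (1 : Matrix (Fin N → Fin 2) (Fin N → Fin 2) ℂ)
    - (1 / 2 : ℂ) • (pauliAt N sigmaX a * pauliAt N sigmaX b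
        + pauliAt N sigmaY a * pauliAt N sigmaY b
        + ((q + q⁻¹) / 2) • (pauliAt N sigmaZ a * pauliAt N sigmaZ b))
    - ((q - q⁻¹) / 4) • (pauliAt N sigmaZ a - pauliAt N sigmaZ b)

/-- The XXZ representation of the Temperley–Lieb generator `e_i` (for `1 ≤ i ≤ N-1`),
acting on the `i`-th and `(i+1)`-st tensor factors (numbered from `1`). -/
noncomputable def eXXZ (N : ℕ) (q : ℂ) (i : ℕ) :
    Matrix (Fin N → Fin 2) (Fin N → Fin 2) ℂ :=
  if h : 1 ≤ i ∧ i ≤ N - 1 ∧ 2 ≤ N then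
    TLdensity N q ⟨i - 1, by omega⟩ ⟨i, by omega⟩
  else 0

/-!
On two neighbouring sites the XXZ density is the rank-one matrix `u wᵀ`, with `u = (0, 1, -q, 0)`
and `w = (0, q⁻¹, -1, 0)`. Reading `u` and `w` as `2 × 2` matrices `U` and `W` (a cup and a cap),
`e_i² = δ e_i` holds because `w ⬝ u = q + q⁻¹`, while `e_i e_{i±1} e_i = e_i` is the zig-zag
identity: a cap on sites `a, b` following a cup on `b, c` transports the state of one site to
another through the matrix `W U = -1`, so that the two zig-zags in the product contribute
`(-1)² = 1`.
-/

open Function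
open scoped Kronecker

section TwoSite

variable {ι α R : Type*} [DecidableEq ι] [Fintype α] [CommSemiring R]

/-- The operator on `(R^α)^{⊗ι}` acting as `M` on the tensor factors `a` and `b` and as the identity
on all others. Vectors are functions of the configuration `f : ι → α`, and the first component of
an index of `M` belongs to site `a`. Meaningful only for `a ≠ b`. -/
def twoSite (a b : ι) : Matrix (α × α) (α × α) R →ₗ[R] Module.End R ((ι → α) → R) :=
  LinearMap.mk₂ R
    (fun M v f => ∑ p : α × α, M (f a, f b) p * v (update (update f a p.1) b p.2))
    (fun _ _ _ => by ext; simp [add_mul, Finset.sum_add_distrib])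
    (fun _ _ _ => by ext; simp [mul_assoc, Finset.mul_sum])
    (fun _ _ _ => by ext; simp [mul_add, Finset.sum_add_distrib])
    (fun _ _ _ => by ext; simp [mul_left_comm, Finset.mul_sum])

theorem twoSite_apply (a b : ι) (M : Matrix (α × α) (α × α) R) (v : (ι → α) → R) (f : ι → α) :
    twoSite a b M v f =
      ∑ p : α × α, M (f a, f b) p * v (update (update f a p.1) b p.2) :=
  rfl

theorem twoSite_mul {a b : ι} (hab : a ≠ b) (M M' : Matrix (α × α) (α × α) R) :
    twoSite a b (M * M') = twoSite a b M * twoSite a b M' := by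
  refine LinearMap.ext fun v => funext fun f => ?_
  have overwrite (p r : α × α) :
      update (update (update (update f a p.1) b p.2) a r.1) b r.2 =
        update (update f a r.1) b r.2 := by
    rw [update_comm hab.symm, update_idem, update_idem]
  simp only [Module.End.mul_apply, twoSite_apply, Matrix.mul_apply, update_self,
    update_of_ne hab, overwrite, Finset.sum_mul, Finset.mul_sum, mul_assoc]
  exact Finset.sum_comm

theorem twoSite_swap {a b : ι} (hab : a ≠ b) (M : Matrix (α × α) (α × α) R) :
    twoSite b a (M.submatrix Prod.swap Prod.swap) = twoSite a b M := by
  refine LinearMap.ext fun v => funext fun f => ?_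
  simp only [twoSite_apply, Matrix.submatrix_apply, Prod.swap_prod_mk, update_comm hab.symm]
  exact Equiv.sum_comp (Equiv.prodComm α α) fun p =>
    M (f a, f b) p * v (update (update f a p.1) b p.2)

theorem commute_twoSite {a b c d : ι} (hac : a ≠ c) (had : a ≠ d) (hbc : b ≠ c) (hbd : b ≠ d)
    (M M' : Matrix (α × α) (α × α) R) : Commute (twoSite a b M) (twoSite c d M') := by
  refine LinearMap.ext fun v => funext fun f => ?_
  have update_pairs_comm (p r : α × α) :
      update (update (update (update f a p.1) b p.2) c r.1) d r.2 =
        update (update (update (update f c r.1) d r.2) a p.1) b p.2 := by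
    rw [update_comm hbc, update_comm hac, update_comm hbd, update_comm had]
  simp only [Module.End.mul_apply, twoSite_apply, update_of_ne hac, update_of_ne had,
    update_of_ne hbc, update_of_ne hbd, update_of_ne hac.symm, update_of_ne had.symm,
    update_of_ne hbc.symm, update_of_ne hbd.symm, update_pairs_comm, Finset.mul_sum]
  rw [Finset.sum_comm]
  simp only [mul_left_comm]

/-- The rank-one two-site matrix `u wᵀ`: the cap `W` followed by the cup `U`, where the vectors `u`
and `w` of `R^α ⊗ R^α` are encoded as the matrices `U` and `W` of their coefficients. -/
def cupCap (U W : Matrix α α R) : Matrix (α × α) (α × α) R :=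
  Matrix.vecMulVec (fun p => U p.1 p.2) (fun p => W p.1 p.2)

theorem cupCap_mul_self (U W : Matrix α α R) :
    cupCap U W * cupCap U W = (Wᵀ * U).trace • cupCap U W := by
  have loop : (fun p : α × α => W p.1 p.2) ⬝ᵥ (fun p => U p.1 p.2) = (Wᵀ * U).trace := by
    simp only [dotProduct, Fintype.sum_prod_type_right, Matrix.trace, Matrix.diag_apply,
      Matrix.mul_apply, Matrix.transpose_apply]
  rw [cupCap, Matrix.vecMulVec_mul_vecMulVec, loop, Matrix.vecMulVec_smul]

theorem twoSite_cupCap_apply (a b : ι) (U W : Matrix α α R) (v : (ι → α) → R) (f : ι → α) :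
    twoSite a b (cupCap U W) v f = U (f a) (f b) *
      ∑ s, ∑ t, W s t * v (update (update f a s) b t) := by
  simp only [twoSite_apply, cupCap, Matrix.vecMulVec_apply, Fintype.sum_prod_type,
    Finset.mul_sum, mul_assoc]

theorem twoSite_cupCap_transpose {a b : ι} (hab : a ≠ b) (U W : Matrix α α R) :
    twoSite b a (cupCap Uᵀ Wᵀ) = twoSite a b (cupCap U W) :=
  twoSite_swap hab (cupCap U W)

variable [DecidableEq α]

theorem sum_zigzag {U W : Matrix α α R} {z : R} (hUW : U * W = z • 1) (hWU : W * U = z • 1)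
    (ψ : α → R) (x : α) :
    ∑ s, ∑ t, W s t * (U t x * ∑ t', ∑ u, W t' u * (U s t' * ψ u)) = z ^ 2 * ψ x := by
  have right_zigzag (s : α) : ∑ t', ∑ u, W t' u * (U s t' * ψ u) = z * ψ s :=
    calc ∑ t', ∑ u, W t' u * (U s t' * ψ u)
      _ = (U *ᵥ (W *ᵥ ψ)) s := by
        simp only [Matrix.mulVec, dotProduct, Finset.mul_sum, mul_left_comm]
      _ = z * ψ s := by
        rw [Matrix.mulVec_mulVec, hUW, Matrix.smul_mulVec, Matrix.one_mulVec, Pi.smul_apply,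
          smul_eq_mul]
  calc ∑ s, ∑ t, W s t * (U t x * ∑ t', ∑ u, W t' u * (U s t' * ψ u))
    _ = ∑ s, (W * U) s x * (z * ψ s) := by
      simp only [right_zigzag, Matrix.mul_apply, Finset.sum_mul, mul_assoc]
    _ = z ^ 2 * ψ x := by
      simp only [hWU, Matrix.smul_apply, Matrix.one_apply, smul_eq_mul, mul_ite, mul_one, mul_zero,
        ite_mul, zero_mul, Finset.sum_ite_eq', Finset.mem_univ, if_true]
      ring

theorem twoSite_cupCap_zigzag_left {a b c : ι} (hab : a ≠ b) (hbc : b ≠ c) (hac : a ≠ c)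
    {U W : Matrix α α R} {z : R} (hUW : U * W = z • 1) (hWU : W * U = z • 1) :
    twoSite a b (cupCap U W) * twoSite b c (cupCap U W) * twoSite a b (cupCap U W) =
      z ^ 2 • twoSite a b (cupCap U W) := by
  refine LinearMap.ext fun v => funext fun f => ?_
  -- The rightmost factor caps off sites `a` and `b`, so it sees only the new state `u` of site `c`.
  have overwrite (s t t' u s' t'' : α) :
      update (update (update (update (update (update f a s) b t) b t') c u) a s') b t'' =
        update (update (update f c u) a s') b t'' := by
    rw [update_idem, update_comm hac.symm, update_comm hab.symm, update_idem, update_comm hbc,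
      update_idem, update_comm hac]
  simp only [Module.End.mul_apply, LinearMap.smul_apply, Pi.smul_apply, smul_eq_mul,
    twoSite_cupCap_apply, update_self, update_of_ne hab, update_of_ne hac, update_of_ne hbc,
    update_of_ne hac.symm, update_of_ne hbc.symm, overwrite]
  rw [sum_zigzag hUW hWU
    (fun u => ∑ s, ∑ t, W s t * v (update (update (update f c u) a s) b t)),
    update_eq_self]
  ring

theorem twoSite_cupCap_zigzag_right {a b c : ι} (hab : a ≠ b) (hbc : b ≠ c) (hac : a ≠ c)
    {U W : Matrix α α R} {z : R} (hUW : U * W = z • 1) (hWU : W * U = z • 1) :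
    twoSite b c (cupCap U W) * twoSite a b (cupCap U W) * twoSite b c (cupCap U W) =
      z ^ 2 • twoSite b c (cupCap U W) := by
  simp only [← twoSite_cupCap_transpose hab, ← twoSite_cupCap_transpose hbc]
  refine twoSite_cupCap_zigzag_left hbc.symm hab.symm hac.symm ?_ ?_ <;>
    simp [← Matrix.transpose_mul, hUW, hWU]

end TwoSite

section XXZ

theorem pauliAt_apply (N : ℕ) (σ : Matrix (Fin 2) (Fin 2) ℂ) (j : Fin N) (f g : Fin N → Fin 2) :
    pauliAt N σ j f g = if update f j (g j) = g then σ (f j) (g j) else 0 := by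
  have agree_off_iff : (∀ k ∈ Finset.univ.erase j, f k = g k) ↔
      update f j (g j) = g := by
    simp [update_eq_iff]
  simp only [pauliAt, Matrix.of_apply, Finset.prod_boole, agree_off_iff, mul_ite, mul_one, mul_zero]

theorem pauliAt_mulVec (N : ℕ) (σ : Matrix (Fin 2) (Fin 2) ℂ) (j : Fin N)
    (v : (Fin N → Fin 2) → ℂ) (f : Fin N → Fin 2) :
    (pauliAt N σ j *ᵥ v) f = ∑ s, σ (f j) s * v (update f j s) := by
  have entry (g : Fin N → Fin 2) : pauliAt N σ j f g =
      ∑ s, if update f j s = g then σ (f j) s else 0 := by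
    rw [Fintype.sum_eq_single (g j), pauliAt_apply]
    rintro s hs
    refine if_neg fun hg => hs ?_
    rw [← hg, update_self]
  simp only [Matrix.mulVec, dotProduct, entry, Finset.sum_mul, ite_mul, zero_mul]
  rw [Finset.sum_comm]
  simp only [Finset.sum_ite_eq, Finset.mem_univ, if_true]

theorem pauliAt_one (N : ℕ) (j : Fin N) : pauliAt N 1 j = 1 := by
  refine Matrix.mulVec_injective (funext₂ fun v f => ?_)
  simp [pauliAt_mulVec, Matrix.one_apply]

theorem toLinAlgEquiv'_pauliAt_mul_pauliAt {N : ℕ} {a b : Fin N} (hab : a ≠ b)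
    (σ τ : Matrix (Fin 2) (Fin 2) ℂ) :
    Matrix.toLinAlgEquiv' (pauliAt N σ a * pauliAt N τ b) = twoSite a b (σ ⊗ₖ τ) := by
  refine LinearMap.ext fun v => funext fun f => ?_
  simp only [Matrix.toLinAlgEquiv'_apply, ← Matrix.mulVec_mulVec, pauliAt_mulVec, twoSite_apply,
    update_of_ne hab.symm, Matrix.kroneckerMap_apply, Fintype.sum_prod_type,
    Finset.mul_sum, mul_assoc]

/-- The cup of the XXZ chain: the `q`-singlet `|01⟩ - q |10⟩`, as a matrix of coefficients. -/
def xxzCup (q : ℂ) : Matrix (Fin 2) (Fin 2) ℂ := !![0, 1; -q, 0]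

/-- The cap of the XXZ chain: the functional `q⁻¹ ⟨01| - ⟨10|`, as a matrix of coefficients. -/
noncomputable def xxzCap (q : ℂ) : Matrix (Fin 2) (Fin 2) ℂ := !![0, q⁻¹; -1, 0]

theorem xxzCup_mul_xxzCap {q : ℂ} (hq : q ≠ 0) : xxzCup q * xxzCap q = (-1 : ℂ) • 1 := by
  ext s t
  fin_cases s <;> fin_cases t <;> simp [xxzCup, xxzCap, hq]

theorem xxzCap_mul_xxzCup {q : ℂ} (hq : q ≠ 0) : xxzCap q * xxzCup q = (-1 : ℂ) • 1 := by
  ext s t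
  fin_cases s <;> fin_cases t <;> simp [xxzCup, xxzCap, hq]

theorem trace_xxzCap_transpose_mul_xxzCup (q : ℂ) : ((xxzCap q)ᵀ * xxzCup q).trace = q + q⁻¹ := by
  simp [xxzCup, xxzCap, Matrix.trace_fin_two, Matrix.mul_apply]

theorem kronecker_density_eq_cupCap {q : ℂ} (hq : q ≠ 0) :
    ((q + q⁻¹) / 4) • ((1 : Matrix (Fin 2) (Fin 2) ℂ) ⊗ₖ (1 : Matrix (Fin 2) (Fin 2) ℂ))
      - (1 / 2 : ℂ) • (sigmaX ⊗ₖ sigmaX + sigmaY ⊗ₖ sigmaY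
          + ((q + q⁻¹) / 2) • (sigmaZ ⊗ₖ sigmaZ))
      - ((q - q⁻¹) / 4) • (sigmaZ ⊗ₖ 1 - 1 ⊗ₖ sigmaZ) = cupCap (xxzCup q) (xxzCap q) := by
  ext ⟨s, t⟩ ⟨s', t'⟩
  fin_cases s <;> fin_cases t <;> fin_cases s' <;> fin_cases t' <;>
    simp [sigmaX, sigmaY, sigmaZ, cupCap, xxzCup, xxzCap, Matrix.vecMulVec_apply, hq] <;>
    ring

theorem toLinAlgEquiv'_TLdensity {N : ℕ} {q : ℂ} (hq : q ≠ 0) {a b : Fin N} (hab : a ≠ b) :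
    Matrix.toLinAlgEquiv' (TLdensity N q a b) = twoSite a b (cupCap (xxzCup q) (xxzCap q)) := by
  rw [← kronecker_density_eq_cupCap hq]
  simp only [TLdensity, map_sub, map_add, map_smul,
    ← toLinAlgEquiv'_pauliAt_mul_pauliAt hab, pauliAt_one, mul_one, one_mul]

theorem toLinAlgEquiv'_eXXZ {N : ℕ} {q : ℂ} (hq : q ≠ 0) {i : ℕ} (hi : 1 ≤ i) (hiN : i < N) :
    Matrix.toLinAlgEquiv' (eXXZ N q i) =
      twoSite ⟨i - 1, by omega⟩ ⟨i, hiN⟩ (cupCap (xxzCup q) (xxzCap q)) := by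
  rw [eXXZ, dif_pos (by omega), toLinAlgEquiv'_TLdensity hq (mt Fin.mk.inj (by omega))]

theorem eXXZ_mul_self {N : ℕ} {q : ℂ} (hq : q ≠ 0) {i : ℕ} (hi : 1 ≤ i) (hiN : i < N) :
    eXXZ N q i * eXXZ N q i = (q + q⁻¹) • eXXZ N q i := by
  apply Matrix.toLinAlgEquiv'.injective
  rw [map_mul, map_smul, toLinAlgEquiv'_eXXZ hq hi hiN,
    ← twoSite_mul (mt Fin.mk.inj (by omega)), cupCap_mul_self,
    trace_xxzCap_transpose_mul_xxzCup, map_smul]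

theorem eXXZ_mul_succ_mul_self {N : ℕ} {q : ℂ} (hq : q ≠ 0) {i : ℕ} (hi : 1 ≤ i)
    (hiN : i + 1 < N) :
    eXXZ N q i * eXXZ N q (i + 1) * eXXZ N q i = eXXZ N q i := by
  apply Matrix.toLinAlgEquiv'.injective
  simp only [map_mul, toLinAlgEquiv'_eXXZ hq hi (Nat.lt_of_succ_lt hiN),
    toLinAlgEquiv'_eXXZ hq (Nat.le_add_left 1 i) hiN]
  refine (twoSite_cupCap_zigzag_left ?_ ?_ ?_ (xxzCup_mul_xxzCap hq) (xxzCap_mul_xxzCup hq)).trans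
    (by simp) <;> exact mt Fin.mk.inj (by omega)

theorem eXXZ_succ_mul_self_mul_succ {N : ℕ} {q : ℂ} (hq : q ≠ 0) {i : ℕ} (hi : 1 ≤ i)
    (hiN : i + 1 < N) :
    eXXZ N q (i + 1) * eXXZ N q i * eXXZ N q (i + 1) = eXXZ N q (i + 1) := by
  apply Matrix.toLinAlgEquiv'.injective
  simp only [map_mul, toLinAlgEquiv'_eXXZ hq hi (Nat.lt_of_succ_lt hiN),
    toLinAlgEquiv'_eXXZ hq (Nat.le_add_left 1 i) hiN]
  refine (twoSite_cupCap_zigzag_right ?_ ?_ ?_ (xxzCup_mul_xxzCap hq) (xxzCap_mul_xxzCup hq)).trans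
    (by simp) <;> exact mt Fin.mk.inj (by omega)

theorem commute_eXXZ {N : ℕ} {q : ℂ} (hq : q ≠ 0) {i j : ℕ} (hi : 1 ≤ i) (hiN : i < N)
    (hj : 1 ≤ j) (hjN : j < N) (hij : 2 ≤ |(i : ℤ) - j|) :
    Commute (eXXZ N q i) (eXXZ N q j) := by
  rw [le_abs] at hij
  apply Commute.of_map (f := Matrix.toLinAlgEquiv') Matrix.toLinAlgEquiv'.injective
  rw [toLinAlgEquiv'_eXXZ hq hi hiN, toLinAlgEquiv'_eXXZ hq hj hjN]
  apply commute_twoSite <;> exact mt Fin.mk.inj (by omega)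

end XXZ

/-- The XXZ spin-chain operators `e_i` satisfy the defining relations of the
Temperley–Lieb algebra `TL_q(N)` with loop fugacity `δ = q + q⁻¹`. -/
theorem xxz_satisfies_temperley_lieb_relations (N : ℕ) (hN : 2 ≤ N) (q : ℂ) (hq : q ≠ 0) :
    (∀ i, 1 ≤ i → i ≤ N - 1 →
      eXXZ N q i * eXXZ N q i = (q + q⁻¹) • eXXZ N q i) ∧
    (∀ i, 1 ≤ i → i ≤ N - 2 →
      eXXZ N q i * eXXZ N q (i + 1) * eXXZ N q i = eXXZ N q i ∧
      eXXZ N q (i + 1) * eXXZ N q i * eXXZ N q (i + 1) = eXXZ N q (i + 1)) ∧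
    (∀ i j, 1 ≤ i → i ≤ N - 1 → 1 ≤ j → j ≤ N - 1 → 2 ≤ |(i : ℤ) - (j : ℤ)| →
      eXXZ N q i * eXXZ N q j = eXXZ N q j * eXXZ N q i) := by
  refine ⟨fun i hi hiN => eXXZ_mul_self hq hi (by omega), fun i hi hiN => ⟨?_, ?_⟩,
    fun i j hi hiN hj hjN hij => commute_eXXZ hq hi (by omega) hj (by omega) hij⟩
  · exact eXXZ_mul_succ_mul_self hq hi (by omega)
  · exact eXXZ_succ_mul_self_mul_succ hq hi (by omega)
end

section
/- Let δ be a complex number with δ² ≠ 1 and δ² ≠ 2, and let E₁(δ), E₂(δ), E₃(δ) be the 6×6 complex matrices whose only nonzero entries (row, column) are: E₁: (3,2)=1, (3,3)=δ, (5,4)=1, (5,5)=δ, (5,6)=1; E₂: (2,1)=1, (2,2)=δ, (2,3)=1, (2,4)=1, (6,5)=1, (6,6)=δ; E₃: (4,2)=1, (4,4)=δ, (5,3)=1, (5,5)=δ, (5,6)=1. Then the vector v(δ) = (1, −δ/(δ²−2), 1/(δ²−2), 1/(δ²−2), −δ/((δ²−2)(δ²−1)), 1/((δ²−2)(δ²−1)))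 satisfies E_i(δ) v(δ) = 0 for i = 1,2,3, and v(δ) is the unique vector in ℂ⁶ with first coordinate equal to 1 that is annihilated by all three matrices E₁(δ), E₂(δ), E₃(δ). -/
open Matrix

/-- The Temperley–Lieb generator `e₁` of `TL_q(4)` acting on the six-dimensional induced
module `W₁[2] ×_f W₁[2]` in the basis `(l, e₂l, e₁e₂l, e₃e₂l, e₁e₃e₂l, e₂e₁e₃e₂l)`. -/
noncomputable def fusE1 (δ : ℂ) : Matrix (Fin 6) (Fin 6) ℂ :=
  !![0, 0, 0, 0, 0, 0;
     0, 0, 0, 0, 0, 0;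
     0, 1, δ, 0, 0, 0;
     0, 0, 0, 0, 0, 0;
     0, 0, 0, 1, δ, 1;
     0, 0, 0, 0, 0, 0]

/-- The Temperley–Lieb generator `e₂` on the fusion module `W₁[2] ×_f W₁[2]`. -/
noncomputable def fusE2 (δ : ℂ) : Matrix (Fin 6) (Fin 6) ℂ :=
  !![0, 0, 0, 0, 0, 0;
     1, δ, 1, 1, 0, 0;
     0, 0, 0, 0, 0, 0;
     0, 0, 0, 0, 0, 0;
     0, 0, 0, 0, 0, 0;
     0, 0, 0, 0, 1, δ]

/-- The Temperley–Lieb generator `e₃` on the fusion module `W₁[2] ×_f W₁[2]`. -/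
noncomputable def fusE3 (δ : ℂ) : Matrix (Fin 6) (Fin 6) ℂ :=
  !![0, 0, 0, 0, 0, 0;
     0, 0, 0, 0, 0, 0;
     0, 0, 0, 0, 0, 0;
     0, 1, 0, δ, 0, 0;
     0, 0, 1, 0, δ, 1;
     0, 0, 0, 0, 0, 0]

/-- The invariant vector `inv(δ)` spanning the one-dimensional summand `W₂[4]` of the
generic fusion `W₁[2] ×_f W₁[2]`. -/
noncomputable def fusInv (δ : ℂ) : Fin 6 → ℂ :=
  ![1, -δ / (δ ^ 2 - 2), 1 / (δ ^ 2 - 2), 1 / (δ ^ 2 - 2),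
    -δ / ((δ ^ 2 - 2) * (δ ^ 2 - 1)), 1 / ((δ ^ 2 - 2) * (δ ^ 2 - 1))]

/-!
Over any commutative ring, and for every `δ`, back substitution expresses each coordinate of an
invariant vector as a polynomial in `δ` times the last coordinate, so the invariants form a free
module of rank one. The first coordinate of its generator is `(δ² - 2)(δ² - 1)`, so an invariant
with first coordinate `1` exists exactly when this element is invertible.
-/

/-- The Temperley–Lieb generators `e₁, e₂, e₃` on the fusion module `W₁[2] ×_f W₁[2]` over a
commutative ring. The family is indexed from zero: `fusionGen δ i` is `eᵢ₊₁`. -/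
def fusionGen {R : Type*} [CommRing R] (δ : R) : Fin 3 → Matrix (Fin 6) (Fin 6) R :=
  ![!![0, 0, 0, 0, 0, 0;
       0, 0, 0, 0, 0, 0;
       0, 1, δ, 0, 0, 0;
       0, 0, 0, 0, 0, 0;
       0, 0, 0, 1, δ, 1;
       0, 0, 0, 0, 0, 0],
    !![0, 0, 0, 0, 0, 0;
       1, δ, 1, 1, 0, 0;
       0, 0, 0, 0, 0, 0;
       0, 0, 0, 0, 0, 0;
       0, 0, 0, 0, 0, 0;
       0, 0, 0, 0, 1, δ],
    !![0, 0, 0, 0, 0, 0;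
       0, 0, 0, 0, 0, 0;
       0, 0, 0, 0, 0, 0;
       0, 1, 0, δ, 0, 0;
       0, 0, 1, 0, δ, 1;
       0, 0, 0, 0, 0, 0]]

/-- The invariant vector of the fusion module `W₁[2] ×_f W₁[2]`, scaled to have last coordinate
`1`, which makes its coordinates polynomials in `δ`. -/
def fusionInvariant {R : Type*} [CommRing R] (δ : R) : Fin 6 → R :=
  ![(δ ^ 2 - 2) * (δ ^ 2 - 1), -δ * (δ ^ 2 - 1), δ ^ 2 - 1, δ ^ 2 - 1, -δ, 1]

section CommRing

variable {R : Type*} [CommRing R] (δ : R) (w : Fin 6 → R)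

lemma fusionGen_zero_mulVec :
    fusionGen δ 0 *ᵥ w = ![0, 0, w 1 + δ * w 2, 0, w 3 + δ * w 4 + w 5, 0] := by
  ext i
  fin_cases i <;> simp [fusionGen, mulVec, dotProduct, Fin.sum_univ_six]

lemma fusionGen_one_mulVec :
    fusionGen δ 1 *ᵥ w = ![0, w 0 + δ * w 1 + w 2 + w 3, 0, 0, 0, w 4 + δ * w 5] := by
  ext i
  fin_cases i <;> simp [fusionGen, mulVec, dotProduct, Fin.sum_univ_six]

lemma fusionGen_two_mulVec :
    fusionGen δ 2 *ᵥ w = ![0, 0, 0, w 1 + δ * w 3, w 2 + δ * w 4 + w 5, 0] := by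
  ext i
  fin_cases i <;> simp [fusionGen, mulVec, dotProduct, Fin.sum_univ_six]

lemma fusionGen_mulVec_fusionInvariant (i : Fin 3) : fusionGen δ i *ᵥ fusionInvariant δ = 0 := by
  fin_cases i <;> ext j <;> fin_cases j <;>
    simp [fusionGen_zero_mulVec, fusionGen_one_mulVec, fusionGen_two_mulVec, fusionInvariant] <;>
    ring

variable {δ w}

lemma eq_smul_fusionInvariant (hw : ∀ i, fusionGen δ i *ᵥ w = 0) :
    w = w 5 • fusionInvariant δ := by
  have e₁ := (fusionGen_zero_mulVec δ w).symm.trans (hw 0)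
  have e₂ := (fusionGen_one_mulVec δ w).symm.trans (hw 1)
  have e₃ := (fusionGen_two_mulVec δ w).symm.trans (hw 2)
  have e₁_row₂ : w 1 + δ * w 2 = 0 := congrFun e₁ 2
  have e₁_row₄ : w 3 + δ * w 4 + w 5 = 0 := congrFun e₁ 4
  have e₂_row₁ : w 0 + δ * w 1 + w 2 + w 3 = 0 := congrFun e₂ 1
  have e₂_row₅ : w 4 + δ * w 5 = 0 := congrFun e₂ 5
  have e₃_row₄ : w 2 + δ * w 4 + w 5 = 0 := congrFun e₃ 4
  have w₄ : w 4 = w 5 * -δ := by linear_combination e₂_row₅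
  have w₃ : w 3 = w 5 * (δ ^ 2 - 1) := by linear_combination e₁_row₄ - δ * w₄
  have w₂ : w 2 = w 5 * (δ ^ 2 - 1) := by linear_combination e₃_row₄ - δ * w₄
  have w₁ : w 1 = w 5 * (-δ * (δ ^ 2 - 1)) := by linear_combination e₁_row₂ - δ * w₂
  have w₀ : w 0 = w 5 * ((δ ^ 2 - 2) * (δ ^ 2 - 1)) := by
    linear_combination e₂_row₁ - δ * w₁ - w₂ - w₃
  ext j
  fin_cases j
  exacts [w₀, w₁, w₂, w₃, w₄, (mul_one _).symm]

theorem fusion_invariant_exists_unique_general :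
    (∀ i, fusionGen δ i *ᵥ w = 0) ↔ w = w 5 • fusionInvariant δ := by
  refine ⟨eq_smul_fusionInvariant, fun hw i => ?_⟩
  rw [hw, mulVec_smul, fusionGen_mulVec_fusionInvariant, smul_zero]

end CommRing

lemma eq_inv_smul_fusionInvariant_iff {K : Type*} [Field K] {δ : K}
    (hδ : (δ ^ 2 - 2) * (δ ^ 2 - 1) ≠ 0) {w : Fin 6 → K} :
    w = ((δ ^ 2 - 2) * (δ ^ 2 - 1))⁻¹ • fusionInvariant δ ↔
      w 0 = 1 ∧ ∀ i, fusionGen δ i *ᵥ w = 0 := by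
  rw [fusion_invariant_exists_unique_general]
  constructor
  · rintro rfl
    exact ⟨inv_mul_cancel₀ hδ, by simp [fusionInvariant]⟩
  · rintro ⟨h0, hw⟩
    have hw₀ : w 5 * ((δ ^ 2 - 2) * (δ ^ 2 - 1)) = 1 := (congrFun hw 0).symm.trans h0
    rwa [eq_inv_of_mul_eq_one_left hw₀] at hw

lemma fusInv_eq_inv_smul_fusionInvariant {δ : ℂ} (hδ : (δ ^ 2 - 2) * (δ ^ 2 - 1) ≠ 0) :
    fusInv δ = ((δ ^ 2 - 2) * (δ ^ 2 - 1))⁻¹ • fusionInvariant δ := by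
  obtain ⟨h2, h1⟩ := mul_ne_zero_iff.mp hδ
  ext j
  fin_cases j <;> simp [fusInv, fusionInvariant] <;> field_simp

lemma eq_fusInv_iff {δ : ℂ} (h1 : δ ^ 2 ≠ 1) (h2 : δ ^ 2 ≠ 2) {w : Fin 6 → ℂ} :
    w = fusInv δ ↔
      w 0 = 1 ∧ fusE1 δ *ᵥ w = 0 ∧ fusE2 δ *ᵥ w = 0 ∧ fusE3 δ *ᵥ w = 0 := by
  have hδ : (δ ^ 2 - 2) * (δ ^ 2 - 1) ≠ 0 := mul_ne_zero (sub_ne_zero.mpr h2) (sub_ne_zero.mpr h1)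
  rw [fusInv_eq_inv_smul_fusionInvariant hδ, eq_inv_smul_fusionInvariant_iff hδ,
    Fin.forall_fin_succ, Fin.forall_fin_two]
  rfl

/-- For generic `δ` (namely `δ² ≠ 1` and `δ² ≠ 2`), the vector `inv(δ)` is annihilated
by `e₁, e₂, e₃` and is the unique such vector with first coordinate `1`. -/
theorem fusion_invariant_exists_unique (δ : ℂ) (h1 : δ ^ 2 ≠ 1) (h2 : δ ^ 2 ≠ 2) :
    (fusE1 δ).mulVec (fusInv δ) = 0 ∧
    (fusE2 δ).mulVec (fusInv δ) = 0 ∧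
    (fusE3 δ).mulVec (fusInv δ) = 0 ∧
    (∀ w : Fin 6 → ℂ, w 0 = 1 →
      (fusE1 δ).mulVec w = 0 → (fusE2 δ).mulVec w = 0 → (fusE3 δ).mulVec w = 0 →
      w = fusInv δ) := by
  obtain ⟨-, he₁, he₂, he₃⟩ := (eq_fusInv_iff h1 h2).mp rfl
  exact ⟨he₁, he₂, he₃, fun w h0 hw₁ hw₂ hw₃ => (eq_fusInv_iff h1 h2).mpr ⟨h0, hw₁, hw₂, hw₃⟩⟩
end

section
/- Let δ be a complex number with δ² = 1 or δ² = 2, and let E₁(δ), E₂(δ), E₃(δ) be the 6×6 complex matrices whose only nonzero entries (row, column) are: E₁: (3,2)=1, (3,3)=δ, (5,4)=1, (5,5)=δ, (5,6)=1; E₂: (2,1)=1, (2,2)=δ, (2,3)=1, (2,4)=1, (6,5)=1, (6,6)=δ; E₃: (4,2)=1, (4,4)=δ, (5,3)=1, (5,5)=δ, (5,6)=1. Then there exists NO vector v ∈ ℂ⁶ with first coordinate equal to 1 such that E_i(δ) v = 0 for all i = 1,2,3. -/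
open Matrix

/-! The invariance equations determine a vector from its last coordinate, one coordinate at a time,
so the invariants form a line. It is spanned by a vector with entries polynomial in `δ` whose first
entry is `(δ² - 1)(δ² - 2)`; first coordinate `1` is therefore attained exactly when this product is
nonzero. -/

theorem fusE1_mulVec_eq_zero_iff (δ : ℂ) (w : Fin 6 → ℂ) :
    fusE1 δ *ᵥ w = 0 ↔ w 1 + δ * w 2 = 0 ∧ w 3 + δ * w 4 + w 5 = 0 := by
  simp [funext_iff, Fin.forall_fin_succ, fusE1, dotProduct, Fin.sum_univ_six]

theorem fusE2_mulVec_eq_zero_iff (δ : ℂ) (w : Fin 6 → ℂ) :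
    fusE2 δ *ᵥ w = 0 ↔ w 0 + δ * w 1 + w 2 + w 3 = 0 ∧ w 4 + δ * w 5 = 0 := by
  simp [funext_iff, Fin.forall_fin_succ, fusE2, dotProduct, Fin.sum_univ_six]

theorem fusE3_mulVec_eq_zero_iff (δ : ℂ) (w : Fin 6 → ℂ) :
    fusE3 δ *ᵥ w = 0 ↔ w 1 + δ * w 3 = 0 ∧ w 2 + δ * w 4 + w 5 = 0 := by
  simp [funext_iff, Fin.forall_fin_succ, fusE3, dotProduct, Fin.sum_univ_six]

/-- The invariants of the fusion module `W₁[2] ×_f W₁[2]`: the vectors annihilated by all three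
Temperley–Lieb generators. -/
noncomputable def fusInvariants (δ : ℂ) : Submodule ℂ (Fin 6 → ℂ) :=
  (fusE1 δ).mulVecLin.ker ⊓ (fusE2 δ).mulVecLin.ker ⊓ (fusE3 δ).mulVecLin.ker

theorem mem_fusInvariants {δ : ℂ} {w : Fin 6 → ℂ} :
    w ∈ fusInvariants δ ↔ fusE1 δ *ᵥ w = 0 ∧ fusE2 δ *ᵥ w = 0 ∧ fusE3 δ *ᵥ w = 0 := by
  simp only [fusInvariants, Submodule.mem_inf, LinearMap.mem_ker, mulVecLin_apply, and_assoc]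

/-- The generator of the invariants of the fusion module, normalized to have coefficient `1` at
`e₂e₁e₃e₂l` rather than at `l`, so that it is defined and nonzero for every `δ`. -/
noncomputable def fusInvariant (δ : ℂ) : Fin 6 → ℂ :=
  ![(δ ^ 2 - 1) * (δ ^ 2 - 2), -δ * (δ ^ 2 - 1), δ ^ 2 - 1, δ ^ 2 - 1, -δ, 1]

theorem fusInvariant_mem_fusInvariants (δ : ℂ) : fusInvariant δ ∈ fusInvariants δ := by
  rw [mem_fusInvariants, fusE1_mulVec_eq_zero_iff, fusE2_mulVec_eq_zero_iff,
    fusE3_mulVec_eq_zero_iff]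
  simp only [fusInvariant, cons_val]
  refine ⟨⟨?_, ?_⟩, ⟨?_, ?_⟩, ?_, ?_⟩ <;> ring

theorem eq_smul_fusInvariant_of_mem_fusInvariants {δ : ℂ} {w : Fin 6 → ℂ}
    (hw : w ∈ fusInvariants δ) : w = w 5 • fusInvariant δ := by
  rw [mem_fusInvariants, fusE1_mulVec_eq_zero_iff, fusE2_mulVec_eq_zero_iff,
    fusE3_mulVec_eq_zero_iff] at hw
  obtain ⟨⟨h₁₂, h₃₄₅⟩, ⟨h₀₁₂₃, h₄₅⟩, -, h₂₄₅⟩ := hw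
  have h4 : w 4 = w 5 * -δ := by linear_combination h₄₅
  have h3 : w 3 = w 5 * (δ ^ 2 - 1) := by linear_combination h₃₄₅ - δ * h4
  have h2 : w 2 = w 5 * (δ ^ 2 - 1) := by linear_combination h₂₄₅ - δ * h4
  have h1 : w 1 = w 5 * (-δ * (δ ^ 2 - 1)) := by linear_combination h₁₂ - δ * h2
  have h0 : w 0 = w 5 * ((δ ^ 2 - 1) * (δ ^ 2 - 2)) := by
    linear_combination h₀₁₂₃ - δ * h1 - h2 - h3
  ext i
  fin_cases i
  exacts [h0, h1, h2, h3, h4, (mul_one _).symm]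

theorem fusInvariants_eq_span (δ : ℂ) : fusInvariants δ = ℂ ∙ fusInvariant δ :=
  le_antisymm
    (fun w hw => Submodule.mem_span_singleton.2
      ⟨w 5, (eq_smul_fusInvariant_of_mem_fusInvariants hw).symm⟩)
    ((Submodule.span_singleton_le_iff_mem _ _).2 (fusInvariant_mem_fusInvariants δ))

theorem exists_mem_fusInvariants_apply_zero_eq_one_iff {δ : ℂ} :
    (∃ w ∈ fusInvariants δ, w 0 = 1) ↔ δ ^ 2 ≠ 1 ∧ δ ^ 2 ≠ 2 :=
  calc (∃ w ∈ fusInvariants δ, w 0 = 1)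
      ↔ ∃ c : ℂ, c * fusInvariant δ 0 = 1 := by
        simp [fusInvariants_eq_span, Submodule.mem_span_singleton]
    _ ↔ fusInvariant δ 0 ≠ 0 := by
        rw [← isUnit_iff_exists_inv', isUnit_iff_ne_zero]
    _ ↔ δ ^ 2 ≠ 1 ∧ δ ^ 2 ≠ 2 := by
        simp [fusInvariant, sub_eq_zero]

/-- At the degenerate points `δ² = 1` (percolation) or `δ² = 2` (Ising), there is no
vector with first coordinate `1` annihilated by all three Temperley–Lieb generators on
the fusion module `W₁[2] ×_f W₁[2]`. -/
theorem fusion_invariant_no_solution (δ : ℂ) (h : δ ^ 2 = 1 ∨ δ ^ 2 = 2) :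
    ¬ ∃ w : Fin 6 → ℂ, w 0 = 1 ∧
      (fusE1 δ).mulVec w = 0 ∧ (fusE2 δ).mulVec w = 0 ∧ (fusE3 δ).mulVec w = 0 := by
  rintro ⟨w, hw₀, hw⟩
  obtain ⟨h₁, h₂⟩ := exists_mem_fusInvariants_apply_zero_eq_one_iff.1
    ⟨w, mem_fusInvariants.2 hw, hw₀⟩
  exact h.elim h₁ h₂
end

section
/- Let H be the 6×6 real matrix H = −[[0,0,0,0,0,0],[1,1,1,1,0,0],[0,1,1,0,0,0],[0,1,0,1,0,0],[0,0,1,1,2,2],[0,0,0,0,1,1]]. Then H is similar over ℝ (i.e. there exists an invertible real 6×6 matrix P with P⁻¹HP equal) to the block-diagonal matrix diag(−3, J, −1, −1−√2, −1+√2), where J = [[0,1],[0,0]] is a 2×2 Jordan block with eigenvalue 0. In particular H is not diagonalizable and has a single Jordan block of size 2 at eigenvalue 0. -/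
open Matrix

/-!
Grouping the basis as `l`; `e₂l`, `e₁e₂l`, `e₃e₂l`; `e₁e₃e₂l`, `e₂e₁e₃e₂l` makes `H` block lower
triangular, with diagonal blocks of spectra `{0}`, `{-1, -1 - √2, -1 + √2}` and `{0, -3}`. Only `0`
is repeated, and its two copies do not split: the zero mode of the last block is the image under `H`
of a vector with nonzero `l`-component. That vector and the five eigenvectors have determinant
`72√2`, so they form a basis. The computation takes place over any commutative ring that contains a
square root of `2`, and the determinant is a unit as soon as `6` is.
-/

theorem inv_mul_mul_eq_of_mulVec_col {n R : Type*} [Fintype n] [DecidableEq n] [CommRing R]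
    {A P D : Matrix n n R} (hP : IsUnit P.det)
    (hcol : ∀ j, A *ᵥ P.col j = ∑ i, D i j • P.col i) : P⁻¹ * A * P = D := by
  have hAP : A * P = P * D := ext_col fun j ↦
    calc (A * P).col j = A *ᵥ P.col j := rfl
      _ = ∑ i, D i j • P.col i := hcol j
      _ = P *ᵥ D.col j := by simp only [mulVec_eq_sum, col_def, transpose_apply, op_smul_eq_smul]
      _ = (P * D).col j := rfl
  rw [Matrix.mul_assoc, hAP, nonsing_inv_mul_cancel_left _ _ hP]

namespace PercolationChain

variable (R : Type*) [CommRing R]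

/-- The Hamiltonian `H = -(e₁ + e₂ + e₃)` on `W₁[2] ×_f W₁[2]` at `δ = 1`, with coefficients in `R`,
in the basis `(l, e₂l, e₁e₂l, e₃e₂l, e₁e₃e₂l, e₂e₁e₃e₂l)`. -/
def hamiltonian : Matrix (Fin 6) (Fin 6) R :=
  -(!![0, 0, 0, 0, 0, 0;
       1, 1, 1, 1, 0, 0;
       0, 1, 1, 0, 0, 0;
       0, 1, 0, 1, 0, 0;
       0, 0, 1, 1, 2, 2;
       0, 0, 0, 0, 1, 1])

/-- The eigenvector of the Hamiltonian of lowest energy, `-3`. -/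
def groundState : Fin 6 → R := ![0, 0, 0, 0, 2, 1]

/-- The eigenvector at energy `0`, scaled to be the image of an integral vector, namely
`logarithmicPartner`. -/
def zeroMode : Fin 6 → R := ![0, 0, 0, 0, 2, -2]

/-- The generalized eigenvector at energy `0` that completes `zeroMode` to a Jordan chain. It is
determined only up to multiples of `zeroMode`. -/
def logarithmicPartner : Fin 6 → R := ![3, 3, -3, -3, 2, 0]

/-- The eigenvector at energy `-1`, which is odd under the reflection `e₁ ↔ e₃` of the chain. -/
def oddMode : Fin 6 → R := ![0, 0, 1, -1, 0, 0]

variable {R}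

/-- The eigenvector at energy `-1 - t`, for `t` a square root of `2`; the choices `t` and `-t` give
the two conjugate energies. -/
def sqrtTwoMode (t : R) : Fin 6 → R := ![0, t, 1, 1, -2, -t]

/-- The matrix whose columns are the Jordan chains of the Hamiltonian, `t` being a square root of
`2`. -/
def jordanBasis (t : R) : Matrix (Fin 6) (Fin 6) R :=
  (of ![groundState R, zeroMode R, logarithmicPartner R, oddMode R, sqrtTwoMode t,
    sqrtTwoMode (-t)])ᵀ

/-- The Jordan form `diag(-3, J, -1, -1 - t, -1 + t)` of the Hamiltonian, where `J` is the Jordan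
block of size `2` at `0` and `t` is a square root of `2`. -/
def jordanForm (t : R) : Matrix (Fin 6) (Fin 6) R :=
  !![-3, 0, 0, 0, 0, 0;
     0, 0, 1, 0, 0, 0;
     0, 0, 0, 0, 0, 0;
     0, 0, 0, -1, 0, 0;
     0, 0, 0, 0, -1 - t, 0;
     0, 0, 0, 0, 0, -1 + t]

theorem hamiltonian_mulVec (a b c d e f : R) :
    hamiltonian R *ᵥ ![a, b, c, d, e, f] =
      ![0, -(a + b + c + d), -(b + c), -(b + d), -(c + d + 2 * e + 2 * f), -(e + f)] := by
  ext i
  fin_cases i <;> simp [hamiltonian, mulVec, dotProduct, Fin.sum_univ_six]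

theorem hamiltonian_mulVec_groundState :
    hamiltonian R *ᵥ groundState R = (-3 : R) • groundState R := by
  norm_num [groundState, hamiltonian_mulVec]

theorem hamiltonian_mulVec_zeroMode : hamiltonian R *ᵥ zeroMode R = 0 := by
  simp [zeroMode, hamiltonian_mulVec]

theorem hamiltonian_mulVec_logarithmicPartner :
    hamiltonian R *ᵥ logarithmicPartner R = zeroMode R := by
  norm_num [logarithmicPartner, zeroMode, hamiltonian_mulVec]

theorem hamiltonian_mulVec_oddMode : hamiltonian R *ᵥ oddMode R = -oddMode R := by
  simp [oddMode, hamiltonian_mulVec]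

theorem hamiltonian_mulVec_sqrtTwoMode {t : R} (ht : t ^ 2 = 2) :
    hamiltonian R *ᵥ sqrtTwoMode t = (-1 - t) • sqrtTwoMode t := by
  simp only [sqrtTwoMode, hamiltonian_mulVec, smul_cons, smul_empty, smul_eq_mul]
  congr! 1 <;> grind

theorem hamiltonian_mulVec_col_jordanBasis {t : R} (ht : t ^ 2 = 2) (j : Fin 6) :
    hamiltonian R *ᵥ (jordanBasis t).col j = ∑ i, jordanForm t i j • (jordanBasis t).col i := by
  have ht_neg : (-t) ^ 2 = 2 := by rw [neg_sq, ht]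
  rw [jordanBasis, of_col]
  fin_cases j
  · simpa [jordanForm, Fin.sum_univ_six] using hamiltonian_mulVec_groundState (R := R)
  · simpa [jordanForm, Fin.sum_univ_six] using hamiltonian_mulVec_zeroMode (R := R)
  · simpa [jordanForm, Fin.sum_univ_six] using hamiltonian_mulVec_logarithmicPartner (R := R)
  · simpa [jordanForm, Fin.sum_univ_six] using hamiltonian_mulVec_oddMode (R := R)
  · simpa [jordanForm, Fin.sum_univ_six] using hamiltonian_mulVec_sqrtTwoMode ht
  · simpa [jordanForm, Fin.sum_univ_six] using hamiltonian_mulVec_sqrtTwoMode ht_neg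

theorem det_jordanBasis (t : R) : (jordanBasis t).det = 72 * t := by
  -- Laplace expansion along the columns
  calc (jordanBasis t).det
      = -(2 * (2 * (3 * (-t + -t + (-t + -t))))) + -(2 * (3 * (-t + -t + (-t + -t)))) := by
        simp [jordanBasis, groundState, zeroMode, logarithmicPartner, oddMode, sqrtTwoMode,
          det_succ_row_zero, Fin.sum_univ_succ, Fin.succAbove, pow_succ]
    _ = 72 * t := by ring

theorem isUnit_det_jordanBasis {t : R} (ht : t ^ 2 = 2) (h6 : IsUnit (6 : R)) :
    IsUnit (jordanBasis t).det := by
  have ht_unit : IsUnit t := isUnit_of_dvd_unit ⟨3 * t, by linear_combination -3 * ht⟩ h6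
  have h72 : 72 * t = 6 ^ 2 * t ^ 3 := by linear_combination -36 * t * ht
  rw [det_jordanBasis, h72]
  exact (h6.pow 2).mul (ht_unit.pow 3)

end PercolationChain

open PercolationChain in
theorem percolation_hamiltonian_jordan_form_general {R : Type*} [CommRing R] (h6 : IsUnit (6 : R))
    {t : R} (ht : t ^ 2 = 2) :
    ∃ P : Matrix (Fin 6) (Fin 6) R, IsUnit P.det ∧ P⁻¹ * hamiltonian R * P = jordanForm t :=
  have hdet : IsUnit (jordanBasis t).det := isUnit_det_jordanBasis ht h6
  ⟨jordanBasis t, hdet, inv_mul_mul_eq_of_mulVec_col hdet (hamiltonian_mulVec_col_jordanBasis ht)⟩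

/-- The Hamiltonian `H = −(e₁+e₂+e₃)` of the percolation Temperley–Lieb chain (`δ = 1`)
on the fusion module `W₁[2] ×_f W₁[2]` is similar over `ℝ` to the block-diagonal matrix
`diag(−3, J, −1, −1−√2, −1+√2)` with `J` a 2×2 Jordan block at eigenvalue `0`. -/
theorem percolation_hamiltonian_jordan_form :
    let H : Matrix (Fin 6) (Fin 6) ℝ :=
      -(!![0, 0, 0, 0, 0, 0;
           1, 1, 1, 1, 0, 0;
           0, 1, 1, 0, 0, 0;
           0, 1, 0, 1, 0, 0;
           0, 0, 1, 1, 2, 2;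
           0, 0, 0, 0, 1, 1])
    let D : Matrix (Fin 6) (Fin 6) ℝ :=
      !![-3, 0, 0, 0, 0, 0;
         0, 0, 1, 0, 0, 0;
         0, 0, 0, 0, 0, 0;
         0, 0, 0, -1, 0, 0;
         0, 0, 0, 0, -1 - Real.sqrt 2, 0;
         0, 0, 0, 0, 0, -1 + Real.sqrt 2]
    ∃ P : Matrix (Fin 6) (Fin 6) ℝ, IsUnit P.det ∧ P⁻¹ * H * P = D :=
  percolation_hamiltonian_jordan_form_general (by norm_num) (Real.sq_sqrt zero_le_two)
end

section
/- Let H be the 6×6 real matrix H = −[[0,0,0,0,0,0],[1,√2,1,1,0,0],[0,1,√2,0,0,0],[0,1,0,√2,0,0],[0,0,1,1,2√2,2],[0,0,0,0,1,√2]]. Then H is similar over ℝ to the block-diagonal matrix diag(−2√2, −√2, J, −(3+√5)/√2, (√10 − 3√2)/2), where J = [[0,1],[0,0]] is a 2×2 Jordan block with eigenvalue 0. In particular H is not diagonalizable and has a single Jordan block of size 2 at eigenvalue 0. -/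
open Matrix

/-!
The fusion module is filtered by the number of through-lines: `e₁e₃e₂l, e₂e₁e₃e₂l` span a submodule
`W₀[4]`, adjoining `e₂l, e₁e₂l, e₃e₂l` adds a subquotient `W₁[4]`, and the quotient by all five is
`W₂[4]`, spanned by the class of `l`. On these pieces `H` has the eigenvalues `-(a + δ)` with
`a² = δ a + 2`, then `-δ` and `-(δ ± √2)`, and finally `0`. At `δ = √2` the eigenvalue `-(δ - √2)`
meets the eigenvalue `0` of `W₂[4]`; the kernel vector lifted from `W₁[4]` is then the image under
`H` of a vector with a nonzero component along `l`, and the two form the Jordan chain.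
-/

section ChangeOfBasis

variable {n R : Type*} [Fintype n] [DecidableEq n] [CommRing R]

theorem inv_mul_mul_eq_of_mulVec_col_eq_sum {A P D : Matrix n n R} (hP : IsUnit P.det)
    (h : ∀ j, A *ᵥ P.col j = ∑ i, D i j • P.col i) : P⁻¹ * A * P = D := by
  have hAP : A * P = P * D := by
    ext i j
    simpa [mul_apply, mulVec, dotProduct, Finset.sum_apply, mul_comm] using congrFun (h j) i
  rw [Matrix.mul_assoc, hAP, nonsing_inv_mul_cancel_left P D hP]

end ChangeOfBasis

section Fusion

variable {R : Type*} [CommRing R]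

/-- The Hamiltonian `-(e₁ + e₂ + e₃)` on `W₁[2] ×_f W₁[2]` at loop fugacity `δ`, in the basis
`(l, e₂l, e₁e₂l, e₃e₂l, e₁e₃e₂l, e₂e₁e₃e₂l)`; column `j` holds the image of basis vector `j`. -/
def fusionHamiltonian (δ : R) : Matrix (Fin 6) (Fin 6) R :=
  -(!![0, 0, 0, 0, 0, 0;
       1, δ, 1, 1, 0, 0;
       0, 1, δ, 0, 0, 0;
       0, 1, 0, δ, 0, 0;
       0, 0, 1, 1, 2 * δ, 2;
       0, 0, 0, 0, 1, δ])

/-- The vector `e₁e₂l - e₃e₂l`, odd under the reflection `e₁ ↔ e₃` of the chain. -/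
def oddVec : Fin 6 → R := ![0, 0, 1, -1, 0, 0]

/-- The reflection-even vector `x e₂l + e₁e₂l + e₃e₂l + z (x e₁e₃e₂l + e₂e₁e₃e₂l)`, the shape of
the lifts to the fusion module of the even eigenvectors of `H` on `W₁[4]`. -/
def evenVec (x z : R) : Fin 6 → R := ![0, x, 1, 1, x * z, z]

/-- The vector `a e₁e₃e₂l + e₂e₁e₃e₂l` of the submodule `W₀[4]`. -/
def noThroughLineVec (a : R) : Fin 6 → R := ![0, 0, 0, 0, a, 1]

theorem fusionHamiltonian_mulVec (δ a b c d e f : R) :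
    fusionHamiltonian δ *ᵥ ![a, b, c, d, e, f] =
      ![0, -(a + δ * b + c + d), -(b + δ * c), -(b + δ * d), -(c + d + 2 * δ * e + 2 * f),
        -(e + δ * f)] := by
  ext i
  fin_cases i <;> simp [fusionHamiltonian, mulVec, dotProduct, Fin.sum_univ_six]

theorem fusionHamiltonian_mulVec_oddVec (δ : R) :
    fusionHamiltonian δ *ᵥ oddVec = -δ • oddVec := by
  simp [oddVec, fusionHamiltonian_mulVec]

theorem fusionHamiltonian_mulVec_evenVec {δ x z : R} (hx : x ^ 2 = 2) (hz : δ * z = -x) :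
    fusionHamiltonian δ *ᵥ evenVec x z = -(δ + x) • evenVec x z := by
  rw [evenVec, fusionHamiltonian_mulVec]
  simp only [smul_cons, smul_eq_mul, smul_empty, vecCons_inj, and_true]
  grind

theorem fusionHamiltonian_mulVec_noThroughLineVec {δ a : R} (ha : a ^ 2 = δ * a + 2) :
    fusionHamiltonian δ *ᵥ noThroughLineVec a = -(a + δ) • noThroughLineVec a := by
  rw [noThroughLineVec, fusionHamiltonian_mulVec]
  simp only [smul_cons, smul_eq_mul, smul_empty, vecCons_inj, and_true]
  grind

end Fusion

section Ising

variable {K : Type*} [Field K] {s t : K}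

/-- The vector completing the kernel vector `evenVec (-s) 1` to a Jordan chain of length two
when `δ = s` is a square root of `2`. -/
def jordanPartner (s : K) : Fin 6 → K := ![2 * s, 0, -(s / 2), -(s / 2), 3, -2 * s]

/-- The matrix whose columns are a Jordan basis of `fusionHamiltonian s`, for square roots
`s` of `2` and `t` of `5`. -/
def isingJordanBasis (s t : K) : Matrix (Fin 6) (Fin 6) K :=
  (of ![evenVec s (-1), oddVec, evenVec (-s) 1, jordanPartner s,
    noThroughLineVec (s * (1 + t) / 2), noThroughLineVec (s * (1 - t) / 2)])ᵀ

/-- The Jordan normal form of `fusionHamiltonian s`, for square roots `s` of `2` and `t` of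
`5`. -/
def isingJordanForm (s t : K) : Matrix (Fin 6) (Fin 6) K :=
  !![-2 * s, 0, 0, 0, 0, 0;
     0, -s, 0, 0, 0, 0;
     0, 0, 0, 1, 0, 0;
     0, 0, 0, 0, 0, 0;
     0, 0, 0, 0, -(3 + t) / s, 0;
     0, 0, 0, 0, 0, (s * t - 3 * s) / 2]

theorem fusionHamiltonian_mulVec_jordanPartner (h2 : (2 : K) ≠ 0) (hs : s ^ 2 = 2) :
    fusionHamiltonian s *ᵥ jordanPartner s = evenVec (-s) 1 := by
  rw [jordanPartner, evenVec, fusionHamiltonian_mulVec]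
  simp only [vecCons_inj, and_true]
  grind

theorem fusionHamiltonian_mulVec_noThroughLineVec_ising (h2 : (2 : K) ≠ 0) (hs : s ^ 2 = 2)
    (ht : t ^ 2 = 5) :
    fusionHamiltonian s *ᵥ noThroughLineVec (s * (1 + t) / 2) =
      (-(3 + t) / s) • noThroughLineVec (s * (1 + t) / 2) := by
  have ha : (s * (1 + t) / 2) ^ 2 = s * (s * (1 + t) / 2) + 2 := by grind
  have hev : -(s * (1 + t) / 2 + s) = -(3 + t) / s := by grind
  rw [fusionHamiltonian_mulVec_noThroughLineVec ha, hev]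

theorem isUnit_det_isingJordanBasis (h2 : (2 : K) ≠ 0) (hs : s ≠ 0) (ht : t ≠ 0) :
    IsUnit (isingJordanBasis s t).det := by
  rw [isUnit_iff_ne_zero]
  intro hdet
  obtain ⟨c, hc, hPc⟩ := exists_mulVec_eq_zero_iff.mpr hdet
  have hrow (i : Fin 6) : c 0 * evenVec s (-1) i + c 1 * oddVec i + c 2 * evenVec (-s) 1 i +
      c 3 * jordanPartner s i + c 4 * noThroughLineVec (s * (1 + t) / 2) i +
      c 5 * noThroughLineVec (s * (1 - t) / 2) i = 0 := by
    simpa [mulVec, dotProduct, Fin.sum_univ_six, isingJordanBasis, mul_comm] using congrFun hPc i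
  simp only [evenVec, oddVec, jordanPartner, noThroughLineVec] at hrow
  have hc3 : c 3 = 0 := by simpa [h2, hs] using hrow 0
  have heven : c 0 = c 2 := by
    simpa [hc3, hs, ← sub_eq_add_neg, ← sub_mul, sub_eq_zero] using hrow 1
  have hplus : c 0 + c 1 + c 2 = 0 := by simpa [hc3] using hrow 2
  have hminus : c 0 - c 1 + c 2 = 0 := by simpa [hc3, sub_eq_add_neg] using hrow 3
  have hc1 : c 1 = 0 := mul_left_cancel₀ h2 (by linear_combination hplus - hminus)
  have hc0 : c 0 = 0 := mul_left_cancel₀ h2 (by linear_combination hplus - hc1 + heven)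
  have hc2 : c 2 = 0 := heven ▸ hc0
  have hfifth : c 4 * (s * (1 + t) / 2) + c 5 * (s * (1 - t) / 2) = 0 := by
    simpa [hc0, hc2, hc3] using hrow 4
  have hsixth : c 4 + c 5 = 0 := by simpa [hc0, hc2, hc3] using hrow 5
  have hc4 : c 4 = 0 := mul_left_cancel₀ (mul_ne_zero hs ht) (by
    linear_combination (norm := (field_simp; ring)) hfifth - s * (1 - t) / 2 * hsixth)
  have hc5 : c 5 = 0 := by simpa [hc4] using hsixth
  refine hc (funext fun i ↦ ?_)
  fin_cases i <;> assumption

theorem fusionHamiltonian_mulVec_col_isingJordanBasis (h2 : (2 : K) ≠ 0) (hs : s ^ 2 = 2)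
    (ht : t ^ 2 = 5) (j : Fin 6) :
    fusionHamiltonian s *ᵥ (isingJordanBasis s t).col j =
      ∑ i, isingJordanForm s t i j • (isingJordanBasis s t).col i := by
  have hcol : (isingJordanBasis s t).col = ![evenVec s (-1), oddVec, evenVec (-s) 1,
    jordanPartner s, noThroughLineVec (s * (1 + t) / 2), noThroughLineVec (s * (1 - t) / 2)] := rfl
  have heven : fusionHamiltonian s *ᵥ evenVec s (-1) = (-2 * s) • evenVec s (-1) := by
    rw [fusionHamiltonian_mulVec_evenVec hs (by ring)]
    congr 1
    ring
  have hkernel : fusionHamiltonian s *ᵥ evenVec (-s) 1 = 0 := by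
    rw [fusionHamiltonian_mulVec_evenVec (by rwa [neg_sq]) (by ring)]
    simp
  have hconj : fusionHamiltonian s *ᵥ noThroughLineVec (s * (1 - t) / 2) =
      ((s * t - 3 * s) / 2) • noThroughLineVec (s * (1 - t) / 2) := by
    have hev : -(3 - t) / s = (s * t - 3 * s) / 2 := by grind
    simpa only [← sub_eq_add_neg, hev] using
      fusionHamiltonian_mulVec_noThroughLineVec_ising h2 hs ((neg_sq t).trans ht)
  rw [hcol]
  fin_cases j <;>
    simp [isingJordanForm, Fin.sum_univ_succ, heven, hkernel, hconj,
      fusionHamiltonian_mulVec_oddVec, fusionHamiltonian_mulVec_jordanPartner h2 hs,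
      fusionHamiltonian_mulVec_noThroughLineVec_ising h2 hs ht]

theorem ising_hamiltonian_jordan_form_general (h2 : (2 : K) ≠ 0) (h5 : (5 : K) ≠ 0)
    (hs : s ^ 2 = 2) (ht : t ^ 2 = 5) :
    ∃ P : Matrix (Fin 6) (Fin 6) K,
      IsUnit P.det ∧ P⁻¹ * fusionHamiltonian s * P = isingJordanForm s t := by
  have hs0 : s ≠ 0 := by grind
  have ht0 : t ≠ 0 := by grind
  have hdet := isUnit_det_isingJordanBasis h2 hs0 ht0
  exact ⟨isingJordanBasis s t, hdet, inv_mul_mul_eq_of_mulVec_col_eq_sum hdet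
    (fusionHamiltonian_mulVec_col_isingJordanBasis h2 hs ht)⟩

end Ising

/-- The Hamiltonian `H = −(e₁+e₂+e₃)` of the Ising Temperley–Lieb chain (`δ = √2`)
on the fusion module `W₁[2] ×_f W₁[2]` is similar over `ℝ` to the block-diagonal matrix
`diag(−2√2, −√2, J, −(3+√5)/√2, (√10 − 3√2)/2)` with `J` a 2×2 Jordan block at
eigenvalue `0`. -/
theorem ising_hamiltonian_jordan_form :
    let H : Matrix (Fin 6) (Fin 6) ℝ :=
      -(!![0, 0, 0, 0, 0, 0;
           1, Real.sqrt 2, 1, 1, 0, 0;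
           0, 1, Real.sqrt 2, 0, 0, 0;
           0, 1, 0, Real.sqrt 2, 0, 0;
           0, 0, 1, 1, 2 * Real.sqrt 2, 2;
           0, 0, 0, 0, 1, Real.sqrt 2])
    let D : Matrix (Fin 6) (Fin 6) ℝ :=
      !![-2 * Real.sqrt 2, 0, 0, 0, 0, 0;
         0, -Real.sqrt 2, 0, 0, 0, 0;
         0, 0, 0, 1, 0, 0;
         0, 0, 0, 0, 0, 0;
         0, 0, 0, 0, -(3 + Real.sqrt 5) / Real.sqrt 2, 0;
         0, 0, 0, 0, 0, (Real.sqrt 10 - 3 * Real.sqrt 2) / 2]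
    ∃ P : Matrix (Fin 6) (Fin 6) ℝ, IsUnit P.det ∧ P⁻¹ * H * P = D := by
  have h10 : √2 * √5 = √10 := by
    rw [← Real.sqrt_mul zero_le_two]
    norm_num
  simpa only [fusionHamiltonian, isingJordanForm, h10] using
    ising_hamiltonian_jordan_form_general two_ne_zero (by norm_num)
      (Real.sq_sqrt (zero_le_two (α := ℝ))) (Real.sq_sqrt (by norm_num : (0 : ℝ) ≤ 5))
end

section
/- Let p ≥ 2, 1 ≤ s₁, s₂ ≤ p and r₁, r₂ ≥ 1 be integers, and set γ₂ = (s₁ + s₂ + p + 1) mod 2. Define d_P(s) = 2p for 1 ≤ s ≤ p−1 and d_P(p) = p. Then the following identity of natural numbers holds: s₁r₁ · s₂r₂ = ∑_{r} [ ∑_{s} s·r + ∑_{s'} d_P(s')·r ], where r runs over the integers from |r₁−r₂|+1 to r₁+r₂−1 in steps of 2, s runs over the integers from |s₁−s₂|+1 to min(s₁+s₂−1, 2p−s₁−s₂−1) in steps of 2, s' runs over the integers from 2p−s₁−s₂+1 to p−γ₂ in steps of 2, and any sum whose upper bound is smaller than its lower bound is empty. -/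
/-!
Each summand is proportional to `r`, so the right-hand side is `∑ r`, which the Clebsch–Gordan count
evaluates to `r₁ * r₂`, times its value for `r₁ = r₂ = 1`. In that case, if `s₁ + s₂ ≤ p`, there are
no projective covers and the count is again Clebsch–Gordan. If `s₁ + s₂ ≥ p`, the irreducible
summands are those of the Clebsch–Gordan series of `p - s₁` and `p - s₂`, the projective ones
contribute `p * (s₁ + s₂ - p)` (for odd `s₁ + s₂ - p` the last one is `s' = p`, of half the
dimension), and `(p - s₁) * (p - s₂) + p * (s₁ + s₂ - p) = s₁ * s₂`.
-/

open Finset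

theorem sum_Icc_filter_mod_eq_sum_range {M : Type*} [AddCommMonoid M] (f : ℕ → M) {m : ℕ}
    (hm : 0 < m) (a b : ℕ) :
    ∑ s ∈ Icc a b with s % m = a % m, f s = ∑ k ∈ range ((b + m - a) / m), f (a + m * k) := by
  have mem_range_iff (k : ℕ) : k ∈ range ((b + m - a) / m) ↔ a + m * k ≤ b := by
    rw [mem_range, ← Nat.succ_le_iff, Nat.le_div_iff_mul_le hm, Nat.succ_mul, mul_comm k m]
    omega
  symm
  refine sum_bij (fun k _ ↦ a + m * k) (fun k hk ↦ ?_) (fun i _ j _ hij ↦ ?_) (fun s hs ↦ ?_)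
    (fun _ _ ↦ rfl)
  · simpa using (mem_range_iff k).mp hk
  · exact Nat.eq_of_mul_eq_mul_left hm (Nat.add_left_cancel hij)
  · obtain ⟨hs_mem, hs_mod⟩ := mem_filter.mp hs
    obtain ⟨has, hsb⟩ := mem_Icc.mp hs_mem
    obtain ⟨k, hk⟩ := (Nat.modEq_iff_dvd' has).mp hs_mod.symm
    have hs_eq : a + m * k = s := by omega
    exact ⟨k, (mem_range_iff k).mpr (hs_eq.trans_le hsb), hs_eq⟩

theorem sum_range_add_one_add_two_mul {R : Type*} [CommSemiring R] (d : R) (n : ℕ) :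
    ∑ k ∈ range n, (d + 1 + 2 * (k : R)) = n * (n + d) := by
  induction n with
  | zero => simp
  | succ n ih =>
    rw [sum_range_succ, ih]
    push_cast
    ring

theorem sum_clebschGordan (x y : ℕ) :
    ∑ s ∈ Icc (max x y - min x y + 1) (x + y - 1) with s % 2 = (max x y - min x y + 1) % 2, s
      = x * y := by
  have card_eq : (x + y - 1 + 2 - (max x y - min x y + 1)) / 2 = min x y := by omega
  calc
    _ = ∑ k ∈ range (min x y), (max x y - min x y + 1 + 2 * k) := by
      rw [sum_Icc_filter_mod_eq_sum_range (fun s ↦ s) two_pos, card_eq]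
    _ = min x y * (min x y + (max x y - min x y)) := by
      simpa using sum_range_add_one_add_two_mul (max x y - min x y) (min x y)
    _ = x * y := by rw [Nat.add_sub_cancel' min_le_max, min_mul_max]

/-- The dimension `d_P(s)` of the projective cover `P_{s,1}`, so that `P_{s,r}` has dimension
`projectiveCoverDim p s * r`. Only the values at `1 ≤ s ≤ p` are meaningful. -/
def projectiveCoverDim (p s : ℕ) : ℕ :=
  if s = p then p else 2 * p

theorem projectiveCoverDim_self (p : ℕ) : projectiveCoverDim p p = p :=
  if_pos rfl

theorem projectiveCoverDim_of_ne {p s : ℕ} (h : s ≠ p) : projectiveCoverDim p s = 2 * p :=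
  if_neg h

theorem sum_range_projectiveCoverDim {p a n : ℕ} (h : a + 2 * n ≤ p + 1) :
    ∑ k ∈ range n, projectiveCoverDim p (a + 2 * k) = n * (2 * p) := by
  have dim_eq (k : ℕ) (hk : k ∈ range n) : projectiveCoverDim p (a + 2 * k) = 2 * p :=
    projectiveCoverDim_of_ne (by have := mem_range.mp hk; omega)
  rw [sum_congr rfl dim_eq, sum_const, card_range, smul_eq_mul]

theorem sum_projectiveCoverDim {p t : ℕ} (ht : t ≤ p + 1) :
    ∑ s ∈ Icc (p + 1 - t) (p - (t + 1) % 2) with s % 2 = (p + 1 - t) % 2, projectiveCoverDim p s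
      = p * t := by
  rw [sum_Icc_filter_mod_eq_sum_range _ two_pos]
  rcases Nat.even_or_odd' t with ⟨m, rfl | rfl⟩
  · have card_eq : (p - (2 * m + 1) % 2 + 2 - (p + 1 - 2 * m)) / 2 = m := by omega
    rw [card_eq, sum_range_projectiveCoverDim (by omega)]
    ring
  · have card_eq : (p - (2 * m + 1 + 1) % 2 + 2 - (p + 1 - (2 * m + 1))) / 2 = m + 1 := by omega
    have last_eq : p + 1 - (2 * m + 1) + 2 * m = p := by omega
    rw [card_eq, sum_range_succ, sum_range_projectiveCoverDim (by omega), last_eq,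
      projectiveCoverDim_self]
    ring

theorem sub_mul_sub_add_mul_add_sub {p x y : ℕ} (hx : x ≤ p) (hy : y ≤ p) (h : p ≤ x + y) :
    (p - x) * (p - y) + p * (x + y - p) = x * y := by
  zify [hx, hy, h]
  ring

theorem sum_irreducible_add_sum_projective {p s₁ s₂ : ℕ} (hs₁ : s₁ ≤ p) (hs₂ : s₂ ≤ p) :
    ∑ s ∈ Icc (max s₁ s₂ - min s₁ s₂ + 1) (min (s₁ + s₂ - 1) (2 * p - s₁ - s₂ - 1))
        with s % 2 = (max s₁ s₂ - min s₁ s₂ + 1) % 2, s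
      + ∑ s ∈ Icc (2 * p - s₁ - s₂ + 1) (p - (s₁ + s₂ + p + 1) % 2)
        with s % 2 = (2 * p - s₁ - s₂ + 1) % 2, projectiveCoverDim p s
      = s₁ * s₂ := by
  rcases le_total (s₁ + s₂) p with h | h
  · have upper_eq : min (s₁ + s₂ - 1) (2 * p - s₁ - s₂ - 1) = s₁ + s₂ - 1 := by omega
    have no_projective : Icc (2 * p - s₁ - s₂ + 1) (p - (s₁ + s₂ + p + 1) % 2) = ∅ :=
      Icc_eq_empty (by omega)
    rw [upper_eq, sum_clebschGordan, no_projective, filter_empty, sum_empty, add_zero]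
  · have lower_eq : max s₁ s₂ - min s₁ s₂ = max (p - s₁) (p - s₂) - min (p - s₁) (p - s₂) := by
      omega
    have upper_eq : min (s₁ + s₂ - 1) (2 * p - s₁ - s₂ - 1) = p - s₁ + (p - s₂) - 1 := by omega
    have lower_eq' : 2 * p - s₁ - s₂ + 1 = p + 1 - (s₁ + s₂ - p) := by omega
    have parity_eq : (s₁ + s₂ + p + 1) % 2 = (s₁ + s₂ - p + 1) % 2 := by omega
    rw [lower_eq, upper_eq, lower_eq', parity_eq, sum_clebschGordan,
      sum_projectiveCoverDim (by omega), sub_mul_sub_add_mul_add_sub hs₁ hs₂ h]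

/-- Dimension count of the tensor product decomposition
`X_{s₁,r₁} ⊗ X_{s₂,r₂} = ⊕_r ( ⊕_s X_{s,r} ⊕ ⊕_{s'} P_{s',r} )` over Lusztig's quantum
group `U_q sl(2)` at `q = e^{iπ/p}`: with `dim X_{s,r} = s·r` and
`dim P_{s,r} = d_P(s)·r` where `d_P(s) = 2p` for `1 ≤ s ≤ p−1` and `d_P(p) = p`,
the dimensions on both sides agree. -/
theorem tensor_product_dimension_count (p s₁ s₂ r₁ r₂ : ℕ) (hp : 2 ≤ p)
    (hs₁ : 1 ≤ s₁) (hs₁' : s₁ ≤ p) (hs₂ : 1 ≤ s₂) (hs₂' : s₂ ≤ p)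
    (hr₁ : 1 ≤ r₁) (hr₂ : 1 ≤ r₂) :
    let γ₂ : ℕ := (s₁ + s₂ + p + 1) % 2
    let dP : ℕ → ℕ := fun s => if s = p then p else 2 * p
    let ra : ℕ := max r₁ r₂ - min r₁ r₂ + 1          -- |r₁−r₂|+1
    let sa : ℕ := max s₁ s₂ - min s₁ s₂ + 1          -- |s₁−s₂|+1
    let sa' : ℕ := 2 * p - s₁ - s₂ + 1               -- 2p−s₁−s₂+1
    s₁ * r₁ * (s₂ * r₂) =
      ∑ r ∈ (Finset.Icc ra (r₁ + r₂ - 1)).filter (fun r => r % 2 = ra % 2),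
        ((∑ s ∈ (Finset.Icc sa (min (s₁ + s₂ - 1) (2 * p - s₁ - s₂ - 1))).filter
            (fun s => s % 2 = sa % 2), s * r)
          + ∑ s' ∈ (Finset.Icc sa' (p - γ₂)).filter
            (fun s' => s' % 2 = sa' % 2), dP s' * r) := by
  intro γ₂ dP ra sa sa'
  simp_rw [← sum_mul, ← add_mul]
  rw [← mul_sum]
  calc
    s₁ * r₁ * (s₂ * r₂) = s₁ * s₂ * (r₁ * r₂) := mul_mul_mul_comm s₁ r₁ s₂ r₂
    _ = _ := congrArg₂ (· * ·) (sum_irreducible_add_sum_projective hs₁' hs₂').symm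
      (sum_clebschGordan r₁ r₂).symm
end
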